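/- Let 0 < μ < L < ∞ and q = μ/L. Let f : ℝ^n → ℝ be L-smooth and μ-strongly convex with minimizer x_⋆ and minimal value f_⋆ = f(x_⋆). Let sequences (x_i), (d_i) in ℝ^n and (γ_i), (β_i) in ℝ be generated by the Fletcher–Reeves method with exact line search: d_0 = ∇f(x_0); for each i, γ_i minimizes γ ↦ f(x_i − γ d_i) over ℝ, x_{i+1} = x_i − γ_i d_i, β_i = ‖∇f(x_{i+1})‖²/‖∇f(x_i)‖², and d_{i+1} = ∇f(x_{i+1}) + β_i d_i. Suppose ∇f(x_i) ≠ 0 for all i ≤ k. Then f(x_{k+1}) − f_⋆ ≤ ((1 − q(1 − ε_k)/(1 + ε_k)) / (1 + q(1 − ε_k)/(1 + ε_k)))² (f(x_k) − f_⋆), where ε_k = √( (1 − q)² k² / (4q + (1 − q)² k²) ). -/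

import Mathlib

/-!
Exact line search makes `∇f(x_{i+1})` orthogonal to `d_i`, so `⟪∇f(x_i), d_i⟫ = ‖∇f(x_i)‖²` and
`‖d_i - ∇f(x_i)‖ / ‖∇f(x_i)‖` is the tangent of the angle between `d_i` and `∇f(x_i)`. The component
of `∇f(x_i)` orthogonal to `d_i` is controlled by this tangent, and that of
`∇f(x_i) - ∇f(x_{i+1})` by cocoercivity of the gradient along the step; as their difference is
`∇f(x_{i+1})`, the tangent grows by at most `(L - μ) / (2√(μL))` per iteration. After `k` iterations
the sine of the angle is therefore at most `ε_k`, which bounds the cosine of the angle between two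
successive gradients. The contraction then holds for a single exact line search with such a
direction, by a weighted sum of the interpolation inequalities between `x_k`, `x_{k+1}` and `x_⋆`.
-/

open scoped InnerProductSpace

section

open scoped Gradient

variable {E : Type*} [NormedAddCommGroup E] [InnerProductSpace ℝ E]

section Quantities

/-- The quadratic form `‖g‖² + μL‖w‖² - 2μ⟪g, w⟫` of a gradient difference `g` and a displacement
`w`. It is the part of the interpolation inequality for `L`-smooth `μ`-strongly convex functions
that is quadratic in the data, in the normalization that has no denominators. -/
def interpolationForm (μ L : ℝ) (g w : E) : ℝ :=
  ‖g‖ ^ 2 + μ * L * ‖w‖ ^ 2 - 2 * μ * ⟪g, w⟫_ℝ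

/-- The bound `(L - μ) / (2√(μL))` on the tangent of the angle between `∇f(a) - ∇f(b)` and
`a - b` when `f` is `L`-smooth and `μ`-strongly convex. The tangent of the angle between the
Fletcher–Reeves direction and the gradient grows by at most this amount per iteration. -/
noncomputable def maxSecantTangent (μ L : ℝ) : ℝ :=
  (L - μ) / (2 * √(μ * L))

/-- The factor by which one exact line search contracts the square root of the function-value gap,
for inverse condition number `q` and a search direction whose angle to the gradient has sine `ε`. -/
noncomputable def contractionFactor (q ε : ℝ) : ℝ :=
  (1 - q * ((1 - ε) / (1 + ε))) / (1 + q * ((1 - ε) / (1 + ε)))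

lemma interpolationForm_neg_neg (μ L : ℝ) (g w : E) :
    interpolationForm μ L (-g) (-w) = interpolationForm μ L g w := by
  simp only [interpolationForm, norm_neg, inner_neg_neg]

variable {μ L q ε : ℝ}

lemma maxSecantTangent_nonneg (hμL : μ ≤ L) : 0 ≤ maxSecantTangent μ L :=
  div_nonneg (sub_nonneg.2 hμL) (by positivity)

lemma maxSecantTangent_sq (h : 0 ≤ μ * L) :
    maxSecantTangent μ L ^ 2 = (L - μ) ^ 2 / (4 * (μ * L)) := by
  rw [maxSecantTangent, div_pow, mul_pow, Real.sq_sqrt h]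
  norm_num

lemma contractionFactor_pos (hq₀ : 0 ≤ q) (hq₁ : q < 1) (hε₀ : 0 ≤ ε) (hε₁ : ε ≤ 1) :
    0 < contractionFactor q ε := by
  have hs₀ : 0 ≤ (1 - ε) / (1 + ε) := div_nonneg (by linarith) (by linarith)
  have hs₁ : (1 - ε) / (1 + ε) ≤ 1 := (div_le_one (by linarith)).2 (by linarith)
  have hqs : q * ((1 - ε) / (1 + ε)) < 1 := (mul_le_of_le_one_right hq₀ hs₁).trans_lt hq₁
  exact div_pos (sub_pos.2 hqs) (add_pos_of_pos_of_nonneg one_pos (mul_nonneg hq₀ hs₀))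

lemma contractionFactor_le_one (hq₀ : 0 ≤ q) (hε₀ : 0 ≤ ε) (hε₁ : ε ≤ 1) :
    contractionFactor q ε ≤ 1 := by
  have hs₀ : 0 ≤ (1 - ε) / (1 + ε) := div_nonneg (by linarith) (by linarith)
  have hqs : 0 ≤ q * ((1 - ε) / (1 + ε)) := mul_nonneg hq₀ hs₀
  exact (div_le_one (by linarith)).2 (by linarith)

lemma contractionFactor_relation (hq₀ : 0 ≤ q) (hε₀ : 0 ≤ ε) (hε₁ : ε ≤ 1) :
    q * (1 + contractionFactor q ε) - (1 - contractionFactor q ε) =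
      ε * (q * (1 + contractionFactor q ε) + (1 - contractionFactor q ε)) := by
  have hden : 1 + ε + q * (1 - ε) ≠ 0 := by nlinarith
  have hε : 1 + ε ≠ 0 := by linarith
  rw [contractionFactor]
  field_simp
  ring

end Quantities

section OrthogonalComponent

lemma norm_sq_mul_norm_starProjection_orthogonal_sq (d y : E) :
    ‖d‖ ^ 2 * ‖(ℝ ∙ d)ᗮ.starProjection y‖ ^ 2 = ‖d‖ ^ 2 * ‖y‖ ^ 2 - ⟪d, y⟫_ℝ ^ 2 := by
  have hpyth := (ℝ ∙ d).norm_sq_eq_add_norm_sq_starProjection y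
  have hproj : ‖d‖ ^ 2 * ‖(ℝ ∙ d).starProjection y‖ ^ 2 = ⟪d, y⟫_ℝ ^ 2 := by
    rcases eq_or_ne d 0 with rfl | hd
    · simp
    · have : ‖d‖ ≠ 0 := norm_ne_zero_iff.2 hd
      rw [Submodule.starProjection_singleton, norm_smul, mul_pow, Real.norm_eq_abs, sq_abs]
      simp only [RCLike.ofReal_real_eq_id, id]
      field_simp
  linear_combination -‖d‖ ^ 2 * hpyth - hproj

lemma norm_mul_norm_starProjection_orthogonal_of_inner_eq {d g : E} (hdg : ⟪d, g⟫_ℝ = ‖g‖ ^ 2) :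
    ‖d‖ * ‖(ℝ ∙ d)ᗮ.starProjection g‖ = ‖g‖ * ‖d - g‖ := by
  refine (pow_left_inj₀ (by positivity) (by positivity) two_ne_zero).1 ?_
  rw [mul_pow, mul_pow, norm_sq_mul_norm_starProjection_orthogonal_sq, norm_sub_sq_real, hdg]
  ring

lemma norm_mul_norm_starProjection_orthogonal_le_of_cocoercive {μ L γ : ℝ} (hμ : 0 < μ)
    (hμL : μ ≤ L) {d y : E}
    (hco : ‖y‖ ^ 2 + μ * L * ‖γ • d‖ ^ 2 ≤ (L + μ) * ⟪y, γ • d⟫_ℝ) :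
    ‖d‖ * ‖(ℝ ∙ d)ᗮ.starProjection y‖ ≤ maxSecantTangent μ L * |⟪d, y⟫_ℝ| := by
  have hμL₀ : 0 < μ * L := mul_pos hμ (hμ.trans_le hμL)
  refine le_of_sq_le_sq ?_ (mul_nonneg (maxSecantTangent_nonneg hμL) (abs_nonneg _))
  rw [mul_pow, mul_pow, sq_abs, norm_sq_mul_norm_starProjection_orthogonal_sq,
    maxSecantTangent_sq hμL₀.le, div_mul_eq_mul_div, le_div_iff₀ (by positivity)]
  rw [norm_smul, mul_pow, Real.norm_eq_abs, sq_abs, real_inner_smul_right, real_inner_comm] at hco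
  have hy := mul_le_mul_of_nonneg_left hco (by positivity : 0 ≤ 4 * (μ * L) * ‖d‖ ^ 2)
  have hsq := sq_nonneg (2 * (μ * L) * γ * ‖d‖ ^ 2 - (L + μ) * ⟪d, y⟫_ℝ)
  linarith

lemma norm_mul_norm_le_of_cocoercive {μ L γ a : ℝ} (hμ : 0 < μ) (hμL : μ ≤ L) {g g' d : E}
    (hgd : ⟪g, d⟫_ℝ = ‖g‖ ^ 2) (hg'd : ⟪g', d⟫_ℝ = 0)
    (hco : ‖g - g'‖ ^ 2 + μ * L * ‖γ • d‖ ^ 2 ≤ (L + μ) * ⟪g - g', γ • d⟫_ℝ)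
    (ha : ‖d - g‖ ≤ a * ‖g‖) :
    ‖g'‖ * ‖d‖ ≤ (a + maxSecantTangent μ L) * ‖g‖ ^ 2 := by
  set P := (ℝ ∙ d)ᗮ.starProjection
  have hsecant : ⟪d, g - g'⟫_ℝ = ‖g‖ ^ 2 := by
    rw [real_inner_comm, inner_sub_left, hgd, hg'd, sub_zero]
  have hg' : g' = P g - P (g - g') := by
    rw [map_sub, sub_sub_cancel, eq_comm, Submodule.starProjection_eq_self_iff,
      Submodule.mem_orthogonal_singleton_iff_inner_left, hg'd]
  calc ‖g'‖ * ‖d‖ = ‖d‖ * ‖P g - P (g - g')‖ := by rw [← hg', mul_comm]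
    _ ≤ ‖d‖ * ‖P g‖ + ‖d‖ * ‖P (g - g')‖ := by
        rw [← mul_add]
        gcongr
        exact norm_sub_le _ _
    _ ≤ ‖g‖ * (a * ‖g‖) + maxSecantTangent μ L * |⟪d, g - g'⟫_ℝ| := by
        rw [norm_mul_norm_starProjection_orthogonal_of_inner_eq ((real_inner_comm _ _).trans hgd)]
        exact add_le_add (mul_le_mul_of_nonneg_left ha (norm_nonneg g))
          (norm_mul_norm_starProjection_orthogonal_le_of_cocoercive hμ hμL hco)
    _ = (a + maxSecantTangent μ L) * ‖g‖ ^ 2 := by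
        rw [hsecant, abs_of_nonneg (sq_nonneg _)]
        ring

-- `√(a ^ 2 / (1 + a ^ 2))` is the sine of the angle with tangent `a`.
lemma norm_sub_le_sqrt_mul_norm {a : ℝ} {g d : E} (hgd : ⟪g, d⟫_ℝ = ‖g‖ ^ 2)
    (ha : ‖d - g‖ ≤ a * ‖g‖) : ‖d - g‖ ≤ √(a ^ 2 / (1 + a ^ 2)) * ‖d‖ := by
  have hpyth : ‖d - g‖ ^ 2 = ‖d‖ ^ 2 - ‖g‖ ^ 2 := by
    rw [norm_sub_sq_real, real_inner_comm, hgd]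
    ring
  have hsq := pow_le_pow_left₀ (norm_nonneg _) ha 2
  refine le_of_sq_le_sq ?_ (by positivity)
  rw [mul_pow, Real.sq_sqrt (by positivity), div_mul_eq_mul_div, le_div_iff₀ (by positivity)]
  linear_combination hsq + a ^ 2 * hpyth

lemma inner_le_sqrt_mul_norm_mul_norm {a : ℝ} {g g' d : E} (hgd : ⟪g, d⟫_ℝ = ‖g‖ ^ 2)
    (hg'd : ⟪g', d⟫_ℝ = 0) (ha : ‖d - g‖ ≤ a * ‖g‖) :
    ⟪g, g'⟫_ℝ ≤ √(a ^ 2 / (1 + a ^ 2)) * (‖g‖ * ‖g'‖) := by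
  rcases eq_or_ne d 0 with rfl | hd
  · have hg : g = 0 := by simpa [eq_comm] using hgd
    simp [hg]
  set P := (ℝ ∙ d)ᗮ.starProjection
  have hg' : P g' = g' := by
    rwa [Submodule.starProjection_eq_self_iff, Submodule.mem_orthogonal_singleton_iff_inner_left]
  have hPg : ‖P g‖ ≤ √(a ^ 2 / (1 + a ^ 2)) * ‖g‖ := by
    refine le_of_mul_le_mul_left ?_ (norm_pos_iff.2 hd)
    rw [norm_mul_norm_starProjection_orthogonal_of_inner_eq ((real_inner_comm _ _).trans hgd)]
    linarith [mul_le_mul_of_nonneg_left (norm_sub_le_sqrt_mul_norm hgd ha) (norm_nonneg g)]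
  calc ⟪g, g'⟫_ℝ = ⟪P g, g'⟫_ℝ := by
        rw [Submodule.inner_starProjection_left_eq_right, hg']
    _ ≤ ‖P g‖ * ‖g'‖ := real_inner_le_norm _ _
    _ ≤ √(a ^ 2 / (1 + a ^ 2)) * ‖g‖ * ‖g'‖ := by gcongr
    _ = √(a ^ 2 / (1 + a ^ 2)) * (‖g‖ * ‖g'‖) := mul_assoc _ _ _

end OrthogonalComponent

section Contraction

variable {μ L ε r φ ψ : ℝ} {u v g h : E}

lemma two_mul_inner_le_of_inner_le (hε : 0 ≤ ε) (hr : 0 ≤ r)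
    (hgh : ⟪g, h⟫_ℝ ≤ ε * (‖g‖ * ‖h‖)) :
    2 * r * ⟪g, h⟫_ℝ ≤ ε * (r ^ 2 * ‖g‖ ^ 2 + ‖h‖ ^ 2) := by
  have hscaled := mul_le_mul_of_nonneg_left hgh (by positivity : 0 ≤ 2 * r)
  have hsq := mul_nonneg hε (sq_nonneg (r * ‖g‖ - ‖h‖))
  linarith

lemma gap_le_of_interpolationForm_le (hμ : 0 < μ) (hμL : μ < L) (hr₀ : 0 < r) (hr₁ : r ≤ 1)
    (hr : μ * (1 + r) - L * (1 - r) = ε * (μ * (1 + r) + L * (1 - r)))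
    (huv : interpolationForm μ L (g - h) (u - v) ≤ 2 * (L - μ) * (φ - ψ))
    (hu : interpolationForm μ L g u ≤ 2 * (L - μ) * (⟪g, u⟫_ℝ - φ))
    (hv : interpolationForm μ L h v ≤ 2 * (L - μ) * (⟪h, v⟫_ℝ - ψ))
    (horth : ⟪h, u - v⟫_ℝ = 0)
    (hgh : 2 * r * ⟪g, h⟫_ℝ ≤ ε * (r ^ 2 * ‖g‖ ^ 2 + ‖h‖ ^ 2)) :
    ψ ≤ r ^ 2 * φ := by
  have hL : 0 < L := hμ.trans hμL
  have hr' : 0 ≤ 1 - r := sub_nonneg.2 hr₁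
  have hLμ : 0 < L - μ := sub_pos.2 hμL
  have hangle : 0 ≤ (μ * (1 + r) - L * (1 - r)) * (r ^ 2 * ‖g‖ ^ 2 + ‖h‖ ^ 2)
      - (μ * (1 + r) + L * (1 - r)) * (2 * r * ⟪g, h⟫_ℝ) := by
    rw [hr]
    linarith [mul_le_mul_of_nonneg_left hgh (by positivity : 0 ≤ μ * (1 + r) + L * (1 - r))]
  have hsq₁ := sq_nonneg ‖L • (v - r • u) + (r • g - h)‖
  have hsq₂ := sq_nonneg ‖(2 * μ * r * L) • u - ((r * (L + μ)) • g + (L - μ) • h)‖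
  simp only [interpolationForm, norm_sub_sq_real, norm_add_sq_real, norm_smul, mul_pow,
    inner_sub_left, inner_sub_right, inner_add_right, real_inner_smul_left,
    real_inner_smul_right, Real.norm_eq_abs, sq_abs, real_inner_comm u v,
    real_inner_comm u g, real_inner_comm u h, real_inner_comm v g, real_inner_comm v h]
    at huv hu hv horth hsq₁ hsq₂
  -- Dual certificate: with these multipliers the three interpolation inequalities and the angle
  -- bound add up to the claim, up to two perfect squares.
  have w_uv := mul_le_mul_of_nonneg_left huv (by positivity : 0 ≤ 2 * μ * L * r ^ 2)
  have w_u := mul_le_mul_of_nonneg_left hu (by positivity : 0 ≤ 2 * μ * L * r ^ 2 * (1 - r))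
  have w_v := mul_le_mul_of_nonneg_left hv (by positivity : 0 ≤ 2 * μ * L * r * (1 - r))
  have w_sq₁ := mul_nonneg (by positivity : 0 ≤ 2 * μ ^ 2 * r) hsq₁
  have w_sq₂ := mul_nonneg hr' hsq₂
  have w_angle := mul_nonneg hLμ.le hangle
  refine le_of_mul_le_mul_left ?_ (by positivity : 0 < 4 * μ * L * r * (L - μ))
  linear_combination w_uv + w_u + w_v + w_sq₁ + w_sq₂ + w_angle
    - 4 * μ * L * r * (1 - r) * (L - μ) * horth

end Contraction

variable [CompleteSpace E] {f : E → ℝ}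

section Gradient

lemma hasDerivAt_comp_add_smul (hf : Differentiable ℝ f) (a v : E) (t : ℝ) :
    HasDerivAt (fun s : ℝ ↦ f (a + s • v)) ⟪∇ f (a + t • v), v⟫_ℝ t := by
  have hline : HasDerivAt (fun s : ℝ ↦ a + s • v) v t := by
    simpa using ((hasDerivAt_id t).smul_const v).const_add a
  exact (hf _).hasGradientAt.hasFDerivAt.comp_hasDerivAt t hline

lemma inner_gradient_eq_zero_of_exact_line_search (hf : Differentiable ℝ f) {a d : E} {γ : ℝ}
    (hγ : ∀ t : ℝ, f (a - γ • d) ≤ f (a - t • d)) : ⟪∇ f (a - γ • d), d⟫_ℝ = 0 := by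
  have hmin : IsLocalMin (fun s : ℝ ↦ f (a + s • -d)) γ :=
    .of_forall fun t ↦ by simpa only [smul_neg, ← sub_eq_add_neg] using hγ t
  have hderiv := hmin.hasDerivAt_eq_zero (hasDerivAt_comp_add_smul hf a (-d) γ)
  rwa [inner_neg_right, neg_eq_zero, smul_neg, ← sub_eq_add_neg] at hderiv

lemma gradient_eq_zero_of_forall_le {xstar : E} (hmin : ∀ y, f xstar ≤ f y) :
    ∇ f xstar = 0 := by
  have hlocal : IsLocalMin f xstar := .of_forall hmin
  rw [gradient, hlocal.fderiv_eq_zero, map_zero]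

lemma le_add_inner_gradient_add_of_lipschitz {L : ℝ} (hf : Differentiable ℝ f)
    (hL : ∀ a b, ‖∇ f a - ∇ f b‖ ≤ L * ‖a - b‖) (a v : E) :
    f (a + v) ≤ f a + ⟪∇ f a, v⟫_ℝ + L / 2 * ‖v‖ ^ 2 := by
  have hline := hasDerivAt_comp_add_smul hf a v
  have hparabola (t : ℝ) : HasDerivAt
      (fun s : ℝ ↦ f a + s * ⟪∇ f a, v⟫_ℝ + s ^ 2 * (L / 2 * ‖v‖ ^ 2))
      (⟪∇ f a, v⟫_ℝ + t * (L * ‖v‖ ^ 2)) t := by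
    refine ((((hasDerivAt_id t).mul_const _).const_add _).add
      (((hasDerivAt_id t).pow 2).mul_const _)).congr_deriv ?_
    simp only [id]
    ring
  have hslope (t : ℝ) (ht : 0 ≤ t) :
      ⟪∇ f (a + t • v), v⟫_ℝ ≤ ⟪∇ f a, v⟫_ℝ + t * (L * ‖v‖ ^ 2) := by
    rw [← sub_le_iff_le_add', ← inner_sub_left]
    calc ⟪∇ f (a + t • v) - ∇ f a, v⟫_ℝ
        ≤ ‖∇ f (a + t • v) - ∇ f a‖ * ‖v‖ := real_inner_le_norm _ _
      _ ≤ L * ‖a + t • v - a‖ * ‖v‖ := by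
          gcongr
          exact hL _ _
      _ = t * (L * ‖v‖ ^ 2) := by
          rw [add_sub_cancel_left, norm_smul, Real.norm_of_nonneg ht]
          ring
  have hle := image_le_of_deriv_right_le_deriv_boundary
    (fun t _ ↦ (hline t).continuousAt.continuousWithinAt)
    (fun t _ ↦ (hline t).hasDerivWithinAt) (by simp)
    (fun t _ ↦ (hparabola t).continuousAt.continuousWithinAt)
    (fun t _ ↦ (hparabola t).hasDerivWithinAt)
    (fun t ht ↦ hslope t ht.1) (Set.right_mem_Icc.2 zero_le_one)
  simpa only [one_smul, one_mul, one_pow] using hle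

end Gradient

section SmoothStronglyConvex

/-- `f` is differentiable, `L`-smooth and `μ`-strongly convex, the last property being stated
through the gradient. -/
structure SmoothStronglyConvex (μ L : ℝ) (f : E → ℝ) : Prop where
  differentiable : Differentiable ℝ f
  lipschitz_gradient : ∀ a b, ‖∇ f a - ∇ f b‖ ≤ L * ‖a - b‖
  strongly_convex : ∀ a b, f a ≥ f b + ⟪∇ f b, a - b⟫_ℝ + μ / 2 * ‖a - b‖ ^ 2

namespace SmoothStronglyConvex

variable {μ L : ℝ}

theorem interpolationForm_le (hf : SmoothStronglyConvex μ L f) (hμL : μ < L) (a b : E) :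
    interpolationForm μ L (∇ f a - ∇ f b) (a - b) ≤
      2 * (L - μ) * (f a - f b - ⟪∇ f b, a - b⟫_ℝ) := by
  have hLμ : 0 < L - μ := sub_pos.2 hμL
  set g := ∇ f a - ∇ f b with hg
  set w := a - b with hw
  set c := (L - μ)⁻¹
  have hcL : c * (L - μ) = 1 := inv_mul_cancel₀ hLμ.ne'
  -- The step `-c (g - μ w)` minimizes the gap between the quadratic upper model at `a` and the
  -- quadratic lower model at `b`.
  have hupper := le_add_inner_gradient_add_of_lipschitz hf.differentiable hf.lipschitz_gradient
    a (-(c • (g - μ • w)))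
  have hlower := hf.strongly_convex (a + -(c • (g - μ • w))) b
  have hdisp : a + -(c • (g - μ • w)) - b = w - c • (g - μ • w) := by rw [hw]; abel
  have hga : ∇ f a = ∇ f b + g := by rw [hg]; abel
  rw [hdisp] at hlower
  have hmodels := mul_le_mul_of_nonneg_left (hlower.le.trans hupper)
    (by positivity : 0 ≤ 2 * (L - μ))
  simp only [interpolationForm, hga, norm_sub_sq_real, norm_neg, norm_smul, mul_pow,
    inner_sub_right, inner_add_left, inner_neg_right, real_inner_smul_right, Real.norm_eq_abs,
    sq_abs, real_inner_self_eq_norm_sq, real_inner_comm g w] at hmodels ⊢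
  linear_combination hmodels
    + (c * (L - μ) - 1) * (‖g‖ ^ 2 - 2 * μ * ⟪g, w⟫_ℝ + μ ^ 2 * ‖w‖ ^ 2) * hcL

theorem interpolationForm_le_of_forall_le (hf : SmoothStronglyConvex μ L f) (hμL : μ < L)
    {xstar : E} (hmin : ∀ y, f xstar ≤ f y) (x : E) :
    interpolationForm μ L (∇ f x) (x - xstar) ≤
      2 * (L - μ) * (⟪∇ f x, x - xstar⟫_ℝ - (f x - f xstar)) := by
  have h := hf.interpolationForm_le hμL xstar x
  rw [gradient_eq_zero_of_forall_le hmin, zero_sub, ← neg_sub x, interpolationForm_neg_neg,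
    inner_neg_right] at h
  linarith

theorem gradient_cocoercive (hf : SmoothStronglyConvex μ L f) (hμL : μ < L) (a b : E) :
    ‖∇ f a - ∇ f b‖ ^ 2 + μ * L * ‖a - b‖ ^ 2 ≤ (L + μ) * ⟪∇ f a - ∇ f b, a - b⟫_ℝ := by
  have hab := hf.interpolationForm_le hμL a b
  have hba := hf.interpolationForm_le hμL b a
  rw [← neg_sub a, ← neg_sub (∇ f a), interpolationForm_neg_neg, inner_neg_right] at hba
  simp only [interpolationForm, inner_sub_left] at hab hba ⊢
  linarith

theorem sub_le_contractionFactor_sq_mul_sub (hf : SmoothStronglyConvex μ L f) (hμ : 0 < μ)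
    (hμL : μ < L) {xstar : E} (hmin : ∀ y, f xstar ≤ f y) {ε : ℝ} (hε₀ : 0 ≤ ε) (hε₁ : ε ≤ 1)
    {x y : E} (horth : ⟪∇ f y, x - y⟫_ℝ = 0)
    (hangle : ⟪∇ f x, ∇ f y⟫_ℝ ≤ ε * (‖∇ f x‖ * ‖∇ f y‖)) :
    f y - f xstar ≤ contractionFactor (μ / L) ε ^ 2 * (f x - f xstar) := by
  have hL : 0 < L := hμ.trans hμL
  have hq₀ : 0 ≤ μ / L := by positivity
  have hr₀ := contractionFactor_pos hq₀ ((div_lt_one hL).2 hμL) hε₀ hε₁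
  have hr₁ := contractionFactor_le_one hq₀ hε₀ hε₁
  have hr := contractionFactor_relation hq₀ hε₀ hε₁
  generalize contractionFactor (μ / L) ε = r at *
  have hr' : μ * (1 + r) - L * (1 - r) = ε * (μ * (1 + r) + L * (1 - r)) := by
    field_simp at hr
    linarith
  have hxy : interpolationForm μ L (∇ f x - ∇ f y) (x - xstar - (y - xstar)) ≤
      2 * (L - μ) * (f x - f xstar - (f y - f xstar)) := by
    simpa only [sub_sub_sub_cancel_right, horth, sub_zero] using hf.interpolationForm_le hμL x y
  exact gap_le_of_interpolationForm_le hμ hμL hr₀ hr₁ hr' hxy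
    (hf.interpolationForm_le_of_forall_le hμL hmin x)
    (hf.interpolationForm_le_of_forall_le hμL hmin y)
    (by rwa [sub_sub_sub_cancel_right])
    (two_mul_inner_le_of_inner_le hε₀ hr₀.le hangle)

end SmoothStronglyConvex

end SmoothStronglyConvex

section Iteration

/-- Iterates `x`, directions `d`, step sizes `γ` and conjugacy coefficients `β` of the
Fletcher–Reeves method with exact line search on `f`. Directions are ascent directions: the step
subtracts `γ i • d i`. -/
structure IsFletcherReeves (f : E → ℝ) (x d : ℕ → E) (γ β : ℕ → ℝ) : Prop where
  direction_zero : d 0 = ∇ f (x 0)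
  exact_line_search : ∀ i, ∀ t : ℝ, f (x i - γ i • d i) ≤ f (x i - t • d i)
  iterate_succ : ∀ i, x (i + 1) = x i - γ i • d i
  coeff_eq : ∀ i, β i = ‖∇ f (x (i + 1))‖ ^ 2 / ‖∇ f (x i)‖ ^ 2
  direction_succ : ∀ i, d (i + 1) = ∇ f (x (i + 1)) + β i • d i

namespace IsFletcherReeves

variable {x d : ℕ → E} {γ β : ℕ → ℝ}

lemma iterate_sub_succ (h : IsFletcherReeves f x d γ β) (i : ℕ) :
    x i - x (i + 1) = γ i • d i := by
  rw [h.iterate_succ, sub_sub_cancel]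

lemma inner_gradient_succ_direction (h : IsFletcherReeves f x d γ β) (hf : Differentiable ℝ f)
    (i : ℕ) : ⟪∇ f (x (i + 1)), d i⟫_ℝ = 0 := by
  rw [h.iterate_succ]
  exact inner_gradient_eq_zero_of_exact_line_search hf (h.exact_line_search i)

lemma inner_gradient_direction (h : IsFletcherReeves f x d γ β) (hf : Differentiable ℝ f) :
    ∀ i, ⟪∇ f (x i), d i⟫_ℝ = ‖∇ f (x i)‖ ^ 2
  | 0 => by rw [h.direction_zero, real_inner_self_eq_norm_sq]
  | i + 1 => by
    rw [h.direction_succ, inner_add_right, real_inner_smul_right,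
      h.inner_gradient_succ_direction hf, real_inner_self_eq_norm_sq, mul_zero, add_zero]

theorem norm_direction_sub_gradient_le {μ L : ℝ} (h : IsFletcherReeves f x d γ β)
    (hf : SmoothStronglyConvex μ L f) (hμ : 0 < μ) (hμL : μ < L) {k : ℕ}
    (hgrad : ∀ i < k, ∇ f (x i) ≠ 0) :
    ‖d k - ∇ f (x k)‖ ≤ k * maxSecantTangent μ L * ‖∇ f (x k)‖ := by
  induction k with
  | zero => simp [h.direction_zero]
  | succ k ih =>
    have hne : ‖∇ f (x k)‖ ≠ 0 := norm_ne_zero_iff.2 (hgrad k k.lt_succ_self)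
    have hco := hf.gradient_cocoercive hμL (x k) (x (k + 1))
    rw [h.iterate_sub_succ] at hco
    have hstep := norm_mul_norm_le_of_cocoercive hμ hμL.le
      (h.inner_gradient_direction hf.differentiable k)
      (h.inner_gradient_succ_direction hf.differentiable k) hco
      (ih fun i hi ↦ hgrad i (hi.trans k.lt_succ_self))
    calc ‖d (k + 1) - ∇ f (x (k + 1))‖
        = ‖∇ f (x (k + 1))‖ * (‖∇ f (x (k + 1))‖ * ‖d k‖) / ‖∇ f (x k)‖ ^ 2 := by
          rw [h.direction_succ, add_sub_cancel_left, norm_smul, h.coeff_eq,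
            Real.norm_of_nonneg (by positivity)]
          ring
      _ ≤ ‖∇ f (x (k + 1))‖ *
            ((k * maxSecantTangent μ L + maxSecantTangent μ L) * ‖∇ f (x k)‖ ^ 2) /
              ‖∇ f (x k)‖ ^ 2 := by gcongr
      _ = (k + 1 : ℕ) * maxSecantTangent μ L * ‖∇ f (x (k + 1))‖ := by
          push_cast
          field_simp

end IsFletcherReeves

lemma sq_div_one_add_sq_mul_maxSecantTangent {μ L : ℝ} (hμ : 0 < μ) (hL : 0 < L) (t : ℝ) :
    (t * maxSecantTangent μ L) ^ 2 / (1 + (t * maxSecantTangent μ L) ^ 2) =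
      (1 - μ / L) ^ 2 * t ^ 2 / (4 * (μ / L) + (1 - μ / L) ^ 2 * t ^ 2) := by
  rw [mul_pow, maxSecantTangent_sq (by positivity)]
  field_simp

end Iteration

theorem fr_convergence_bound_general {μ L : ℝ} (hμ : 0 < μ) (hμL : μ < L) {q : ℝ}
    (hq : q = μ / L) (hf : SmoothStronglyConvex μ L f) {xstar : E} (hmin : ∀ y, f xstar ≤ f y)
    {x d : ℕ → E} {γ β : ℕ → ℝ} (hfr : IsFletcherReeves f x d γ β)
    {k : ℕ} (hgrad : ∀ i < k, ∇ f (x i) ≠ 0) {εk : ℝ}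
    (hεk : εk = √((1 - q) ^ 2 * (k : ℝ) ^ 2 / (4 * q + (1 - q) ^ 2 * (k : ℝ) ^ 2))) :
    f (x (k + 1)) - f xstar ≤ contractionFactor q εk ^ 2 * (f (x k) - f xstar) := by
  subst hq
  rw [← sq_div_one_add_sq_mul_maxSecantTangent hμ (hμ.trans hμL)] at hεk
  have horth := hfr.inner_gradient_succ_direction hf.differentiable k
  have hstep : ⟪∇ f (x (k + 1)), x k - x (k + 1)⟫_ℝ = 0 := by
    rw [hfr.iterate_sub_succ, real_inner_smul_right, horth, mul_zero]
  have hangle := inner_le_sqrt_mul_norm_mul_norm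
    (hfr.inner_gradient_direction hf.differentiable k) horth
    (hfr.norm_direction_sub_gradient_le hf hμ hμL hgrad)
  rw [← hεk] at hangle
  have hεk₀ : 0 ≤ εk := hεk ▸ Real.sqrt_nonneg _
  have hεk₁ : εk ≤ 1 := by
    rw [hεk]
    exact Real.sqrt_le_one.2 ((div_le_one (by positivity)).2 (le_add_of_nonneg_left zero_le_one))
  exact hf.sub_le_contractionFactor_sq_mul_sub hμ hμL hmin hεk₀ hεk₁ hstep hangle

end

/-- Worst-case bound for the Fletcher–Reeves method with exact line search:
after `k` iterations, one more iteration contracts the function-value gap by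
`((1 − q(1 − ε_k)/(1 + ε_k))/(1 + q(1 − ε_k)/(1 + ε_k)))²`, where `q = μ/L` and
`ε_k = √((1 − q)²k²/(4q + (1 − q)²k²))`. -/
theorem fr_convergence_bound
    (n : ℕ) (μ L : ℝ) (hμ : 0 < μ) (hμL : μ < L)
    (q : ℝ) (hq : q = μ / L)
    (f : EuclideanSpace ℝ (Fin n) → ℝ)
    (hdiff : Differentiable ℝ f)
    (hsmooth : ∀ a b, ‖gradient f a - gradient f b‖ ≤ L * ‖a - b‖)
    (hsc : ∀ a b, f a ≥ f b + ⟪gradient f b, a - b⟫_ℝ + μ / 2 * ‖a - b‖ ^ 2)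
    (xstar : EuclideanSpace ℝ (Fin n)) (hmin : ∀ y, f xstar ≤ f y)
    (x d : ℕ → EuclideanSpace ℝ (Fin n)) (γ β : ℕ → ℝ)
    (hd0 : d 0 = gradient f (x 0))
    (hls : ∀ i, ∀ t : ℝ, f (x i - γ i • d i) ≤ f (x i - t • d i))
    (hx : ∀ i, x (i + 1) = x i - γ i • d i)
    (hβ : ∀ i, β i = ‖gradient f (x (i + 1))‖ ^ 2 / ‖gradient f (x i)‖ ^ 2)
    (hd : ∀ i, d (i + 1) = gradient f (x (i + 1)) + β i • d i)
    (k : ℕ) (hgrad : ∀ i ≤ k, gradient f (x i) ≠ 0)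
    (εk : ℝ)
    (hεk : εk = Real.sqrt ((1 - q) ^ 2 * (k : ℝ) ^ 2
        / (4 * q + (1 - q) ^ 2 * (k : ℝ) ^ 2))) :
    f (x (k + 1)) - f xstar ≤
      ((1 - q * ((1 - εk) / (1 + εk))) / (1 + q * ((1 - εk) / (1 + εk)))) ^ 2
        * (f (x k) - f xstar) :=
  fr_convergence_bound_general hμ hμL hq ⟨hdiff, hsmooth, hsc⟩ hmin
    ⟨hd0, hls, hx, hβ, hd⟩ (fun i hi ↦ hgrad i hi.le) hεk
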